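/- If G = F/R is a presentation of a group G by a free group F with normal subgroup R, then there is an exact sequence 1 → [F,R] → R ∩ [F,F] → H_2(G;ℤ) → 1; in particular H_2(G;ℤ) ≅ (R ∩ [F,F])/[F,R] (Hopf's formula). -/

import Mathlib

/-- The boundary `C₂ → C₁` of the inhomogeneous bar complex computing group homology:
`∂[g₁|g₂] = [g₂] - [g₁g₂] + [g₁]`. -/
noncomputable def barD21 (k : Type) [CommRing k] (G : Type) [Group G] :
    ((G × G) →₀ k) →ₗ[k] (G →₀ k) :=
  Finsupp.lift (G →₀ k) k (G × G) fun p =>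
    Finsupp.single p.2 1 - Finsupp.single (p.1 * p.2) 1 + Finsupp.single p.1 1

/-- The boundary `C₃ → C₂` of the inhomogeneous bar complex computing group homology:
`∂[g₁|g₂|g₃] = [g₂|g₃] - [g₁g₂|g₃] + [g₁|g₂g₃] - [g₁|g₂]`. -/
noncomputable def barD32 (k : Type) [CommRing k] (G : Type) [Group G] :
    ((G × G × G) →₀ k) →ₗ[k] ((G × G) →₀ k) :=
  Finsupp.lift ((G × G) →₀ k) k (G × G × G) fun t =>
    Finsupp.single (t.2.1, t.2.2) 1 - Finsupp.single (t.1 * t.2.1, t.2.2) 1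
      + Finsupp.single (t.1, t.2.1 * t.2.2) 1 - Finsupp.single (t.1, t.2.1) 1

/-- Second group homology `H₂(G; k)`: 2-cycles modulo 2-boundaries of the inhomogeneous
bar complex. -/
noncomputable abbrev groupH2 (k : Type) [CommRing k] (G : Type) [Group G] : Type :=
  @HasQuotient.Quotient ↥(LinearMap.ker (barD21 k G))
    (Submodule k ↥(LinearMap.ker (barD21 k G)))
    (@Submodule.hasQuotient k ↥(LinearMap.ker (barD21 k G)) _ _ _)
    ((LinearMap.range (barD32 k G)).comap (LinearMap.ker (barD21 k G)).subtype)

/-!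
Let `U` be the extension of `G` by `C₂ / B₂` given by the tautological cocycle `(g, h) ↦ [g|h]`
of the bar complex. Reading a commutator of `U` as a 1-chain shows that `H₂(G) = Z₂ / B₂` is the
part of `C₂ / B₂` lying in `[U, U]`. Every central extension of `G` receives a map from `U` over
`G`, namely its factor set extended linearly to 2-chains; in particular there is
`θ : U → F / [F, R]`. Since `F` is free, the projection `F → G` also lifts to `χ : F → U`.
A commutator in a central extension depends only on the images of its entries in the base, so
`χ` maps `[F, F]` onto `[U, U]`, and `θ ∘ χ` is the projection to `F / [F, R]` on `[F, F]`.
Hence `χ` maps `R ∩ [F, F]` onto `H₂(G)`, with kernel `[F, R]`.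
-/

open scoped commutatorElement IsMulCommutative

section CentralKernel

variable {X Y Z : Type*} [Group X] [Group Y] [Group Z] {p : Y →* Z}

theorem commutatorElement_eq_of_ker_le_center (hp : p.ker ≤ Subgroup.center Y) {a a' b b' : Y}
    (ha : p a = p a') (hb : p b = p b') : ⁅a, b⁆ = ⁅a', b'⁆ := by
  have factor {y y' : Y} (h : p y = p y') : ∃ z ∈ Subgroup.center Y, y = y' * z :=
    ⟨y'⁻¹ * y, hp (p.eq_iff.mp h), by group⟩
  obtain ⟨z, hz, rfl⟩ := factor ha
  obtain ⟨w, hw, rfl⟩ := factor hb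
  rw [Subgroup.mem_center_iff] at hz hw
  calc ⁅a' * z, b' * w⁆
      = a' * (z * (b' * w)) * z⁻¹ * a'⁻¹ * w⁻¹ * b'⁻¹ := by rw [commutatorElement_def]; group
    _ = a' * b' * (w * a'⁻¹) * w⁻¹ * b'⁻¹ := by rw [← hz]; group
    _ = ⁅a', b'⁆ := by rw [← hw, commutatorElement_def]; group

theorem commutator_le_eqLocus (hp : p.ker ≤ Subgroup.center Y) {f g : X →* Y}
    (hfg : p.comp f = p.comp g) : commutator X ≤ f.eqLocus g := by
  rw [commutator_def, Subgroup.commutator_le]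
  intro a _ b _
  change f ⁅a, b⁆ = g ⁅a, b⁆
  simp only [map_commutatorElement]
  exact commutatorElement_eq_of_ker_le_center hp (DFunLike.congr_fun hfg a)
    (DFunLike.congr_fun hfg b)

theorem map_commutator_eq_of_surjective_comp (hp : p.ker ≤ Subgroup.center Y) {f : X →* Y}
    (hf : Function.Surjective (p.comp f)) : (commutator X).map f = commutator Y := by
  refine le_antisymm ?_ ?_
  · rw [map_commutator_eq, commutator_def]
    exact Subgroup.commutator_mono le_top le_top
  · rw [commutator_def Y, Subgroup.commutator_le]
    intro y _ y' _
    obtain ⟨x, hx⟩ := hf (p y)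
    obtain ⟨x', hx'⟩ := hf (p y')
    refine ⟨⁅x, x'⁆, Subgroup.commutator_mem_commutator trivial trivial, ?_⟩
    rw [map_commutatorElement]
    exact commutatorElement_eq_of_ker_le_center hp hx hx'

theorem commutator_top_le_ker (hp : p.ker ≤ Subgroup.center Y) (f : X →* Y) :
    ⁅(⊤ : Subgroup X), (p.comp f).ker⁆ ≤ f.ker := by
  rw [Subgroup.commutator_le]
  intro x _ r hr
  rw [MonoidHom.mem_ker, map_commutatorElement, commutatorElement_eq_one_iff_mul_comm]
  exact Subgroup.mem_center_iff.mp (hp hr) (f x)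

end CentralKernel

/-- A 2-cocycle on `G` with values in `A`, on which `G` acts trivially. It is not assumed to be
normalized. -/
structure TwoCocycle (G A : Type*) [Mul G] [Add A] where
  toFun : G → G → A
  cocycle (g h j : G) : toFun g h + toFun (g * h) j = toFun h j + toFun g (h * j)

namespace TwoCocycle

instance {G A : Type*} [Mul G] [Add A] : CoeFun (TwoCocycle G A) fun _ => G → G → A :=
  ⟨toFun⟩

variable {G A : Type*} [Group G] [AddCommGroup A] (c : TwoCocycle G A)

theorem apply_one_left (g : G) : c 1 g = c 1 1 := by
  simpa using (c.cocycle 1 1 g).symm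

theorem apply_one_right (g : G) : c g 1 = c 1 1 := by
  simpa using c.cocycle g 1 1

/-- The central extension of `G` by `A` with factor set `c`. Since `c` need not be normalized, its
identity is `(-c 1 1, 1)`. -/
@[ext]
structure Extension (c : TwoCocycle G A) where
  left : A
  right : G

namespace Extension

variable {c}

instance : Mul c.Extension := ⟨fun x y => ⟨x.left + y.left + c x.right y.right, x.right * y.right⟩⟩

instance : One c.Extension := ⟨⟨-c 1 1, 1⟩⟩

instance : Inv c.Extension := ⟨fun x => ⟨-x.left - c x.right⁻¹ x.right - c 1 1, x.right⁻¹⟩⟩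

@[simp] theorem mul_left (x y : c.Extension) :
    (x * y).left = x.left + y.left + c x.right y.right := rfl

@[simp] theorem mul_right (x y : c.Extension) : (x * y).right = x.right * y.right := rfl

@[simp] theorem one_left : (1 : c.Extension).left = -c 1 1 := rfl

@[simp] theorem one_right : (1 : c.Extension).right = 1 := rfl

@[simp] theorem inv_left (x : c.Extension) :
    x⁻¹.left = -x.left - c x.right⁻¹ x.right - c 1 1 := rfl

@[simp] theorem inv_right (x : c.Extension) : x⁻¹.right = x.right⁻¹ := rfl

instance : Group c.Extension := Group.ofLeftAxioms
  (fun x y z => by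
    ext
    · simp only [mul_left, mul_right]
      linear_combination (norm := abel) c.cocycle x.right y.right z.right
    · simp only [mul_right, mul_assoc])
  (fun x => by
    ext
    · simp only [mul_left, one_left, one_right, c.apply_one_left]
      abel
    · simp only [mul_right, one_right, one_mul])
  (fun x => by
    ext
    · simp only [mul_left, inv_left, inv_right, one_left]
      abel
    · simp only [mul_right, inv_right, one_right, inv_mul_cancel])

variable (c) in
/-- The inclusion of the fibre `A` into the extension. -/
def inl : Multiplicative A →* c.Extension where
  toFun a := ⟨a.toAdd - c 1 1, 1⟩
  map_one' := by ext <;> simp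
  map_mul' a b := by
    ext
    · simp only [toAdd_mul, mul_left]
      abel
    · simp

variable (c) in
/-- The projection of the extension onto its base `G`. -/
def rightHom : c.Extension →* G where
  toFun := right
  map_one' := rfl
  map_mul' _ _ := rfl

@[simp] theorem rightHom_apply (x : c.Extension) : rightHom c x = x.right := rfl

@[simp] theorem inl_left (a : Multiplicative A) : (inl c a).left = a.toAdd - c 1 1 := rfl

@[simp] theorem inl_right (a : Multiplicative A) : (inl c a).right = 1 := rfl

theorem inl_injective : Function.Injective (inl c) := fun _ _ h =>
  Multiplicative.toAdd.injective (sub_left_injective (congrArg left h))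

theorem range_inl : (inl c).range = (rightHom c).ker := by
  refine le_antisymm ?_ fun x hx => ⟨Multiplicative.ofAdd (x.left + c 1 1), ?_⟩
  · rintro _ ⟨a, rfl⟩
    rfl
  · ext
    · simp
    · exact (MonoidHom.mem_ker.mp hx).symm

theorem ker_rightHom_le_center : (rightHom c).ker ≤ Subgroup.center c.Extension := by
  rw [← range_inl]
  rintro _ ⟨a, rfl⟩
  rw [Subgroup.mem_center_iff]
  intro x
  ext
  · simp only [mul_left, inl_left, inl_right, c.apply_one_left, c.apply_one_right]
    abel
  · simp

theorem mk_zero_mul_mk_zero (g h : G) :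
    (⟨0, g⟩ * ⟨0, h⟩ : c.Extension) = inl c (Multiplicative.ofAdd (c g h)) * ⟨0, g * h⟩ := by
  ext <;> simp [c.apply_one_left]

/-- The homomorphism on the extension given by `f` on the fibre and by `s` on the elements
`(0, g)`. -/
def lift {E : Type*} [Group E] (f : Multiplicative A →* E) (s : G → E)
    (hfs : ∀ a g, Commute (f a) (s g))
    (hs : ∀ g h, s g * s h = f (Multiplicative.ofAdd (c g h)) * s (g * h)) :
    c.Extension →* E :=
  MonoidHom.mk' (fun x => f (Multiplicative.ofAdd x.left) * s x.right) fun x y => by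
    simp only [mul_left, mul_right, ofAdd_add, map_mul]
    rw [mul_assoc _ _ (s (x.right * y.right)), ← hs]
    simp only [mul_assoc]
    rw [← mul_assoc (s x.right), ← (hfs _ x.right).eq, mul_assoc]

section Lift

variable {E : Type*} [Group E] {f : Multiplicative A →* E} {s : G → E}
  {hfs : ∀ a g, Commute (f a) (s g)}
  {hs : ∀ g h, s g * s h = f (Multiplicative.ofAdd (c g h)) * s (g * h)}

theorem lift_apply (x : c.Extension) :
    lift f s hfs hs x = f (Multiplicative.ofAdd x.left) * s x.right := rfl

theorem lift_inl (a : Multiplicative A) : lift f s hfs hs (inl c a) = f a := by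
  have map_one_one : f (Multiplicative.ofAdd (c 1 1)) = s 1 := by simpa using (hs 1 1).symm
  simp [lift_apply, ofAdd_sub, map_one_one]

end Lift

end Extension

/-- The coboundary `(g, h) ↦ b h - b (g * h) + b g` of a function `b`. -/
def coboundary (b : G → A) : TwoCocycle G A where
  toFun g h := b h - b (g * h) + b g
  cocycle g h j := by
    rw [mul_assoc]
    abel

/-- The factor set `(g, h) ↦ s g * s h * (s (g * h))⁻¹` of a section `s` of a central extension
`p`. -/
def ofSection {E : Type*} [Group E] {p : E →* G} (hp : p.ker ≤ Subgroup.center E) (s : G → E)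
    (hs : Function.RightInverse s p) : TwoCocycle G (Additive p.ker) where
  toFun g h := Additive.ofMul ⟨s g * s h * (s (g * h))⁻¹, by simp [hs _]⟩
  cocycle g h j := by
    refine congrArg Additive.ofMul (Subtype.ext ?_)
    have central : s h * s j * (s (h * j))⁻¹ ∈ Subgroup.center E := hp (by simp [hs _])
    have comm := Subgroup.mem_center_iff.mp central (s g)
    calc s g * s h * (s (g * h))⁻¹ * (s (g * h) * s j * (s (g * h * j))⁻¹)
        = s g * (s h * s j * (s (h * j))⁻¹) * s (h * j) * (s (g * (h * j)))⁻¹ := by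
          rw [mul_assoc g h j]; group
      _ = s h * s j * (s (h * j))⁻¹ * (s g * s (h * j) * (s (g * (h * j)))⁻¹) := by
          rw [comm]; group

end TwoCocycle

section BarComplex

variable {k : Type} [CommRing k] {G : Type} [Group G]

theorem barD32_single (g h j : G) : barD32 k G (Finsupp.single (g, h, j) 1) =
    Finsupp.single (h, j) 1 - Finsupp.single (g * h, j) 1 + Finsupp.single (g, h * j) 1
      - Finsupp.single (g, h) 1 := by
  simp [barD32]

variable (k G) in
/-- The quotient `C₂ / B₂` of the 2-chains of the bar complex by the boundaries. -/
abbrev BarCokernel : Type := ((G × G) →₀ k) ⧸ LinearMap.range (barD32 k G)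

variable (k G) in
/-- The tautological 2-cocycle `(g, h) ↦ [g|h]` with values in `C₂ / B₂`. Every 2-cocycle with
values in a `k`-module is obtained from it by a unique linear map, `barLift`. -/
noncomputable def barCocycle : TwoCocycle G (BarCokernel k G) where
  toFun g h := (LinearMap.range (barD32 k G)).mkQ (Finsupp.single (g, h) 1)
  cocycle g h j := by
    have boundary : (LinearMap.range (barD32 k G)).mkQ
        (barD32 k G (Finsupp.single (g, h, j) 1)) = 0 :=
      (Submodule.Quotient.mk_eq_zero _).mpr ⟨_, rfl⟩
    rw [barD32_single, map_sub, map_add, map_sub] at boundary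
    linear_combination (norm := abel) -boundary

section BarLift

variable {A : Type*} [AddCommGroup A] [Module k A] (c : TwoCocycle G A)

variable (k) in
/-- The linear map on `C₂ / B₂` given by a 2-cocycle on the basis of 2-chains. -/
noncomputable def barLift : BarCokernel k G →ₗ[k] A :=
  (LinearMap.range (barD32 k G)).liftQ (Finsupp.lift A k (G × G) fun p => c p.1 p.2) <| by
    rw [LinearMap.range_le_ker_iff]
    ext ⟨g, h, j⟩
    simp only [LinearMap.comp_apply, Finsupp.lsingle_apply, barD32_single, map_sub, map_add,
      LinearMap.zero_apply, Finsupp.lift_apply, zero_smul, Finsupp.sum_single_index, one_smul]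
    linear_combination (norm := abel) -c.cocycle g h j

@[simp] theorem barLift_barCocycle (g h : G) : barLift k c (barCocycle k G g h) = c g h :=
  ((LinearMap.range (barD32 k G)).liftQ_apply _ _).trans (by simp)

theorem barCokernel_hom_ext {f f' : BarCokernel k G →ₗ[k] A}
    (h : ∀ g g', f (barCocycle k G g g') = f' (barCocycle k G g g')) : f = f' := by
  ext ⟨g, g'⟩
  exact h g g'

end BarLift

variable (k G) in
/-- The boundary `C₂ / B₂ → C₁` induced by `barD21`. -/
noncomputable def barBoundary : BarCokernel k G →ₗ[k] (G →₀ k) :=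
  barLift k (TwoCocycle.coboundary fun g => Finsupp.single g 1)

theorem barBoundary_barCocycle (g h : G) : barBoundary k G (barCocycle k G g h) =
    Finsupp.single h 1 - Finsupp.single (g * h) 1 + Finsupp.single g 1 :=
  barLift_barCocycle _ g h

theorem ker_barBoundary : LinearMap.ker (barBoundary k G) =
    (LinearMap.ker (barD21 k G)).map (LinearMap.range (barD32 k G)).mkQ :=
  Submodule.ker_liftQ _ _ _

variable (k G) in
/-- The inclusion of `H₂ = Z₂ / B₂` into `C₂ / B₂`. -/
noncomputable def h2Inclusion : groupH2 k G →ₗ[k] BarCokernel k G :=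
  Submodule.mapQ _ _ (LinearMap.ker (barD21 k G)).subtype le_rfl

theorem h2Inclusion_injective : Function.Injective (h2Inclusion k G) := by
  rw [← LinearMap.ker_eq_bot, h2Inclusion, Submodule.ker_mapQ]
  exact Submodule.mkQ_map_self _

theorem range_h2Inclusion :
    LinearMap.range (h2Inclusion k G) = LinearMap.ker (barBoundary k G) := by
  rw [h2Inclusion, Submodule.range_mapQ, Submodule.range_subtype, ker_barBoundary]

end BarComplex

section BarExtension

open TwoCocycle TwoCocycle.Extension

variable (G : Type) [Group G]

/-- The central extension of `G` by `C₂ / B₂` with the tautological factor set `(g, h) ↦ [g|h]`. -/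
abbrev BarExtension : Type := (barCocycle ℤ G).Extension

/-- The homomorphism from the bar extension to 1-chains that sends `(0, g)` to `[g]` and restricts
to the boundary on `C₂ / B₂`. -/
noncomputable def barExtensionToChains : BarExtension G →* Multiplicative (G →₀ ℤ) :=
  lift (barBoundary ℤ G).toAddMonoidHom.toMultiplicative
    (fun g => Multiplicative.ofAdd (Finsupp.single g 1)) (fun _ _ => Commute.all _ _)
    fun g h => by
      refine congrArg Multiplicative.ofAdd ?_
      change Finsupp.single g 1 + Finsupp.single h 1 =
        barBoundary ℤ G (barCocycle ℤ G g h) + Finsupp.single (g * h) 1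
      rw [barBoundary_barCocycle]
      abel

/-- The linear map from 1-chains to the abelianized bar extension that sends `[g]` to the class of
`(0, g)`. -/
noncomputable def chainsToAbelianization :
    (G →₀ ℤ) →ₗ[ℤ] Additive (Abelianization (BarExtension G)) :=
  Finsupp.lift _ ℤ G fun g => Additive.ofMul (Abelianization.of ⟨0, g⟩)

variable {G}

theorem chainsToAbelianization_barBoundary (m : BarCokernel ℤ G) :
    chainsToAbelianization G (barBoundary ℤ G m) =
      Additive.ofMul (Abelianization.of (inl (barCocycle ℤ G) (Multiplicative.ofAdd m))) := by
  suffices h : chainsToAbelianization G ∘ₗ barBoundary ℤ G =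
      (Abelianization.of.comp (inl (barCocycle ℤ G))).toAdditive.toIntLinearMap from
    LinearMap.congr_fun h m
  refine barCokernel_hom_ext fun g h => ?_
  have relation := congrArg (fun x => Additive.ofMul (Abelianization.of x))
    (mk_zero_mul_mk_zero (c := barCocycle ℤ G) g h)
  simp only [map_mul, ofMul_mul] at relation
  rw [LinearMap.comp_apply, barBoundary_barCocycle]
  simp only [chainsToAbelianization, map_add, map_sub, Finsupp.lift_apply, zero_smul,
    Finsupp.sum_single_index, one_smul]
  refine Eq.trans ?_ (sub_eq_of_eq_add relation)
  abel

theorem inl_mem_commutator_iff (m : BarCokernel ℤ G) :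
    inl (barCocycle ℤ G) (Multiplicative.ofAdd m) ∈ commutator (BarExtension G) ↔
      barBoundary ℤ G m = 0 := by
  constructor
  · intro hm
    have := Abelianization.commutator_subset_ker (barExtensionToChains G) hm
    rwa [MonoidHom.mem_ker, barExtensionToChains, lift_inl] at this
  · intro hm
    rw [← Abelianization.ker_of, MonoidHom.mem_ker, ← ofMul_eq_zero,
      ← chainsToAbelianization_barBoundary, hm, map_zero]

variable (G) in
/-- The embedding of `H₂(G)` into the bar extension. -/
noncomputable def h2ToBarExtension : Multiplicative (groupH2 ℤ G) →* BarExtension G :=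
  (inl (barCocycle ℤ G)).comp (h2Inclusion ℤ G).toAddMonoidHom.toMultiplicative

theorem h2ToBarExtension_injective : Function.Injective (h2ToBarExtension G) :=
  inl_injective.comp h2Inclusion_injective

theorem range_h2ToBarExtension : (h2ToBarExtension G).range =
    (rightHom (barCocycle ℤ G)).ker ⊓ commutator (BarExtension G) := by
  ext x
  rw [Subgroup.mem_inf, ← range_inl]
  constructor
  · rintro ⟨z, rfl⟩
    refine ⟨⟨_, rfl⟩, (inl_mem_commutator_iff _).mpr ?_⟩
    exact range_h2Inclusion.le ⟨_, rfl⟩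
  · rintro ⟨⟨m, rfl⟩, hm⟩
    obtain ⟨z, hz⟩ := range_h2Inclusion.ge ((inl_mem_commutator_iff m.toAdd).mp hm)
    exact ⟨z, congrArg (inl _) hz⟩

theorem exists_barExtension_hom {E : Type*} [Group E] {p : E →* G}
    (hp : p.ker ≤ Subgroup.center E) (hsurj : Function.Surjective p) :
    ∃ θ : BarExtension G →* E, p.comp θ = rightHom (barCocycle ℤ G) := by
  obtain ⟨s, hs⟩ := hsurj.hasRightInverse
  have : IsMulCommutative p.ker :=
    Subgroup.le_centralizer_iff_isMulCommutative.mp (hp.trans (Subgroup.center_le_centralizer _))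
  let f : Multiplicative (BarCokernel ℤ G) →* p.ker :=
    (barLift ℤ (ofSection hp s hs)).toAddMonoidHom.toMultiplicativeLeft
  have commute (a g) : Commute (p.ker.subtype.comp f a) (s g) :=
    (Subgroup.mem_center_iff.mp (hp (f a).2) (s g)).symm
  have factor_set (g h : G) : s g * s h =
      p.ker.subtype.comp f (Multiplicative.ofAdd (barCocycle ℤ G g h)) * s (g * h) := by
    have hf : f (Multiplicative.ofAdd (barCocycle ℤ G g h)) = (ofSection hp s hs g h).toMul :=
      congrArg Additive.toMul (barLift_barCocycle _ g h)
    simp [hf, ofSection]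
  refine ⟨lift (p.ker.subtype.comp f) s commute factor_set, ?_⟩
  ext x
  have hfx : p (p.ker.subtype.comp f (Multiplicative.ofAdd x.left)) = 1 :=
    (f (Multiplicative.ofAdd x.left)).2
  rw [MonoidHom.comp_apply, lift_apply, map_mul, hfx, one_mul, hs, rightHom_apply]

end BarExtension

section Hopf

open TwoCocycle.Extension

variable {F : Type} [Group F] {R : Subgroup F} [R.Normal] {χ : F →* BarExtension (F ⧸ R)}

theorem commutator_top_le_inf_commutator : ⁅(⊤ : Subgroup F), R⁆ ≤ R ⊓ commutator F :=
  le_inf (Subgroup.commutator_le_right _ _) (Subgroup.commutator_mono le_rfl le_top)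

variable (R) in
/-- The projection `F / [F, R] → F / R`. -/
def centralQuotientHom : F ⧸ ⁅(⊤ : Subgroup F), R⁆ →* F ⧸ R :=
  QuotientGroup.lift _ (QuotientGroup.mk' R)
    ((Subgroup.commutator_le_right _ _).trans (QuotientGroup.ker_mk' R).ge)

theorem ker_centralQuotientHom_le_center :
    (centralQuotientHom R).ker ≤ Subgroup.center (F ⧸ ⁅(⊤ : Subgroup F), R⁆) := by
  rw [centralQuotientHom, QuotientGroup.ker_lift, QuotientGroup.ker_mk',
    ← Subgroup.commutator_top_left_eq_bot_iff_le_center,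
    ← Subgroup.map_top_of_surjective _ (QuotientGroup.mk'_surjective _),
    ← Subgroup.map_commutator]
  exact (Subgroup.map_eq_bot_iff _).mpr (QuotientGroup.ker_mk' _).ge

theorem map_inf_commutator (hχ : (rightHom _).comp χ = QuotientGroup.mk' R) :
    (R ⊓ commutator F).map χ = (rightHom _).ker ⊓ commutator (BarExtension (F ⧸ R)) := by
  have ker_comp : (rightHom _).ker.comap χ = R := by
    rw [MonoidHom.comap_ker, hχ, QuotientGroup.ker_mk']
  have map_commutator : (commutator F).map χ = commutator (BarExtension (F ⧸ R)) :=
    map_commutator_eq_of_surjective_comp ker_rightHom_le_center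
      (hχ ▸ QuotientGroup.mk'_surjective R)
  calc (R ⊓ commutator F).map χ
      = ((rightHom _).ker.comap χ ⊓ commutator F).map χ := by rw [ker_comp]
    _ = (rightHom _).ker ⊓ (commutator F).map χ :=
      SetLike.coe_injective <| Set.image_preimage_inter χ (commutator F)
        (rightHom (barCocycle ℤ (F ⧸ R))).ker
    _ = (rightHom _).ker ⊓ commutator (BarExtension (F ⧸ R)) := by rw [map_commutator]

theorem ker_domRestrict_inf_commutator (hχ : (rightHom _).comp χ = QuotientGroup.mk' R) :
    (χ.domRestrict (R ⊓ commutator F)).ker =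
      ⁅(⊤ : Subgroup F), R⁆.subgroupOf (R ⊓ commutator F) := by
  obtain ⟨θ, hθ⟩ := exists_barExtension_hom (ker_centralQuotientHom_le_center (R := R))
    (QuotientGroup.lift_surjective_of_surjective _ _ (QuotientGroup.mk'_surjective R) _)
  have eqOn : commutator F ≤ (θ.comp χ).eqLocus (QuotientGroup.mk' _) :=
    commutator_le_eqLocus ker_centralQuotientHom_le_center <| by
      rw [← MonoidHom.comp_assoc, hθ, hχ]
      rfl
  rw [MonoidHom.ker_domRestrict]
  refine le_antisymm (fun x hx => ?_) (Subgroup.comap_mono ?_)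
  · have hx' : θ (χ x) = ((x : F) : F ⧸ ⁅(⊤ : Subgroup F), R⁆) := eqOn x.2.2
    rw [Subgroup.mem_subgroupOf, MonoidHom.mem_ker] at hx
    rw [hx, map_one] at hx'
    exact (QuotientGroup.eq_one_iff (x : F)).mp hx'.symm
  · have := commutator_top_le_ker ker_rightHom_le_center χ
    rwa [hχ, QuotientGroup.ker_mk'] at this

theorem hopf_formula_general (R : Subgroup F) [R.Normal] (χ : F →* BarExtension (F ⧸ R))
    (hχ : (rightHom _).comp χ = QuotientGroup.mk' R) :
    ⁅(⊤ : Subgroup F), R⁆ ≤ R ⊓ commutator F ∧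
      Nonempty (groupH2 ℤ (F ⧸ R) ≃+ Additive ((R ⊓ commutator F : Subgroup F) ⧸
        (⁅(⊤ : Subgroup F), R⁆.subgroupOf (R ⊓ commutator F)))) := by
  refine ⟨commutator_top_le_inf_commutator, ⟨MulEquiv.toAdditiveRight ?_⟩⟩
  have range_eq : (h2ToBarExtension (F ⧸ R)).range = (χ.domRestrict (R ⊓ commutator F)).range := by
    rw [range_h2ToBarExtension, MonoidHom.domRestrict_range, map_inf_commutator hχ]
  exact (MonoidHom.ofInjective h2ToBarExtension_injective).trans <|
    (MulEquiv.subgroupCongr range_eq).trans <|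
    (QuotientGroup.quotientKerEquivRange _).symm.trans <|
    QuotientGroup.quotientMulEquivOfEq (ker_domRestrict_inf_commutator hχ)

end Hopf

/-- Hopf's formula: for a presentation `G = F/R` of a group by a free group `F` with
normal subgroup `R`, one has `[F,R] ≤ R ∩ [F,F]` and
`H₂(G; ℤ) ≅ (R ∩ [F,F]) / [F,R]` (equivalently, the sequence
`1 → [F,R] → R ∩ [F,F] → H₂(G;ℤ) → 1` is exact). -/
theorem hopf_formula (α : Type) (R : Subgroup (FreeGroup α)) [R.Normal] :
    ⁅(⊤ : Subgroup (FreeGroup α)), R⁆ ≤ R ⊓ commutator (FreeGroup α)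
    ∧ Nonempty (groupH2 ℤ (FreeGroup α ⧸ R) ≃+
        Additive ((R ⊓ commutator (FreeGroup α) : Subgroup (FreeGroup α)) ⧸
          (⁅(⊤ : Subgroup (FreeGroup α)), R⁆.subgroupOf
            (R ⊓ commutator (FreeGroup α))))) := by
  exact hopf_formula_general R
    (FreeGroup.lift fun a => ⟨0, QuotientGroup.mk (FreeGroup.of a)⟩) (by ext a; simp)
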